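/- (Łojasiewicz inequality, semialgebraic division form) Let V ⊂ ℝᴺ be a locally closed semialgebraic set and φ, ψ : V → ℝ continuous semialgebraic functions such that the zero set of φ in V is contained in the zero set of ψ in V. Then there exist a positive integer n and a continuous semialgebraic function ρ : V → ℝ such that ψⁿ = ρ·φ on V. -/

import Mathlib

open MvPolynomial

/-- A semialgebraic subset of `ℝᴺ`: a finite union of finite intersections of
polynomial equalities and strict inequalities. -/
def IsSemialgebraic {N : ℕ} (S : Set (Fin N → ℝ)) : Prop :=
  ∃ (k l : ℕ) (p : Fin k → Fin l → MvPolynomial (Fin N) ℝ) (σ : Fin k → Fin l → Bool),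
    S = ⋃ i, ⋂ j,
      {x | if σ i j then eval x (p i j) = 0 else 0 < eval x (p i j)}

/-- A function `f` on `V ⊆ ℝᴺ` is semialgebraic if its graph is a semialgebraic
subset of `ℝᴺ⁺¹`. -/
def IsSemialgebraicOn {N : ℕ} (V : Set (Fin N → ℝ)) (f : (Fin N → ℝ) → ℝ) : Prop :=
  IsSemialgebraic {y : Fin (N + 1) → ℝ |
    (fun i : Fin N => y i.castSucc) ∈ V ∧ y (Fin.last N) = f fun i : Fin N => y i.castSucc}

/-!
Tarski–Seidenberg is proved in the form of order isomorphisms of the line matching signs. Given a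
finite set of polynomials in one variable over a ring `R`, close it under derivatives, truncations
and pseudo-remainders. Two homomorphisms `R → ℝ` that give every leading coefficient in this closure
the same sign specialize it to two families with the same table of signs: adding the polynomials by
increasing degree, the sign of a new `p` at a root of an old `q` is determined by that of the
pseudo-remainder of `p` modulo `q`, and between consecutive roots of the old ones `p` is strictly
monotone, so that its further roots are located by the intermediate value theorem. Hence whether
a fibre of a semialgebraic set is empty depends only on the signs of finitely many polynomials in
the remaining variables.

For the inequality, exhaust `V` by semialgebraic compact sets `K δ`, `δ → 0⁺`. By compactness
`|φ|` is bounded below by a positive constant on the part of `K δ` where `δ ≤ |ψ|`. As a positive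
bound depending semialgebraically on `δ`, it can be taken to be a power `δ ^ m`. At a point `y`
near a zero of `ψ`, the choice `δ = |ψ y|` gives `|ψ y| ^ m ≤ |φ y|`, so `ψ ^ n / φ`, extended by
zero, is continuous for large `n`.
-/

open Filter Set Topology
open scoped Polynomial

/-! ### Matching the signs of two functions by an order isomorphism -/

theorem exists_orderIso_apply_eq_of_le {a b x y : ℝ} (hax : a < x) (hxy : x ≤ y) (hyb : y < b) :
    ∃ k : ℝ ≃o ℝ, k x = y ∧ EqOn k id (Ioo a b)ᶜ := by
  set s := (y - a) / (x - a) with hs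
  set t := (b - y) / (b - x) with ht
  have one_le_s : 1 ≤ s := by rw [hs, one_le_div] <;> linarith
  have t_pos : 0 < t := div_pos (by linarith) (by linarith)
  have t_le_one : t ≤ 1 := by rw [ht, div_le_one] <;> linarith
  -- The piecewise linear function through `(a, a)`, `(x, y)`, `(b, b)`.
  let f : ℝ → ℝ := fun z => max z (min (a + (z - a) * s) (b + (z - b) * t))
  have f_fix : EqOn f id (Ioo a b)ᶜ := by
    intro z hz
    rw [mem_compl_iff, mem_Ioo, not_and_or, not_lt, not_lt] at hz
    refine max_eq_left (min_le_iff.mpr (hz.imp (fun h => ?_) fun h => ?_)) <;> nlinarith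
  have f_mono : StrictMono f := fun u v huv => max_lt_max huv (min_lt_min (by gcongr) (by gcongr))
  have f_surj : Function.Surjective f := by
    refine Continuous.surjective (by fun_prop)
      (tendsto_atTop_mono (fun z => le_max_left _ _) tendsto_id) (tendsto_id.congr' ?_)
    filter_upwards [eventually_le_atBot a] with z hz
    exact (f_fix fun h => hz.not_gt h.1).symm
  refine ⟨f_mono.orderIsoOfSurjective f f_surj, ?_, f_fix⟩
  have h₁ : a + (x - a) * s = y := by rw [hs, mul_div_cancel₀ _ (by linarith)]; ring
  have h₂ : b + (x - b) * t = y := by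
    rw [← neg_sub b x, neg_mul, ht, mul_div_cancel₀ _ (by linarith)]; ring
  change max x (min (a + (x - a) * s) (b + (x - b) * t)) = y
  rw [h₁, h₂, min_self, max_eq_right hxy]

theorem exists_orderIso_apply_eq {a b x y : ℝ} (hx : x ∈ Ioo a b) (hy : y ∈ Ioo a b) :
    ∃ k : ℝ ≃o ℝ, k x = y ∧ EqOn k id (Ioo a b)ᶜ := by
  rcases le_total x y with h | h
  · exact exists_orderIso_apply_eq_of_le hx.1 h hy.2
  · obtain ⟨k, hk, hfix⟩ := exists_orderIso_apply_eq_of_le hy.1 h hx.2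
    exact ⟨k.symm, by rw [← hk, k.symm_apply_apply],
      fun z hz => k.symm_apply_eq.mpr (hfix hz).symm⟩

theorem orderIso_mem_Icc_of_eqOn_id {k : ℝ ≃o ℝ} {a b y : ℝ} (hk : EqOn k id (Ioo a b)ᶜ)
    (hy : y ∈ Icc a b) : k y ∈ Icc a b := by
  have hka : k a = a := hk fun h => h.1.false
  have hkb : k b = b := hk fun h => h.2.false
  exact ⟨hka ▸ k.monotone hy.1, hkb ▸ k.monotone hy.2⟩

theorem sign_eq_of_forall_uIcc_ne_zero {f : ℝ → ℝ} {a b : ℝ} (hf : ContinuousOn f (uIcc a b))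
    (h : ∀ y ∈ uIcc a b, f y ≠ 0) : SignType.sign (f a) = SignType.sign (f b) := by
  by_contra hne
  have zero_mem : (0 : ℝ) ∈ uIcc (f a) (f b) := by
    rw [mem_uIcc]
    rcases lt_or_gt_of_ne (h a left_mem_uIcc) with ha | ha <;>
      rcases lt_or_gt_of_ne (h b right_mem_uIcc) with hb | hb
    · exact absurd (by rw [sign_neg ha, sign_neg hb]) hne
    · exact Or.inl ⟨ha.le, hb.le⟩
    · exact Or.inr ⟨hb.le, ha.le⟩
    · exact absurd (by rw [sign_pos ha, sign_pos hb]) hne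
  obtain ⟨y, hy, hy0⟩ := intermediate_value_uIcc hf zero_mem
  exact h y hy hy0

theorem sign_apply_orderIso_of_fixes_zeros {f : ℝ → ℝ} (hf : Continuous f) {k : ℝ ≃o ℝ}
    (hk : ∀ z, f z = 0 → k z = z) (y : ℝ) :
    SignType.sign (f (k y)) = SignType.sign (f y) := by
  by_cases hy : f y = 0
  · rw [hk y hy]
  refine sign_eq_of_forall_uIcc_ne_zero hf.continuousOn fun z hz hz0 => ?_
  -- Since `k z = z`, the points `y` and `k y` lie on the same side of `z`.
  have hyz : y ≠ z := by rintro rfl; exact hy hz0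
  rcases lt_or_gt_of_ne hyz with h | h
  · have := k.strictMono h
    rw [hk z hz0] at this
    exact (max_lt this h).not_ge hz.2
  · have := k.strictMono h
    rw [hk z hz0] at this
    exact (lt_min this h).not_ge hz.1

theorem sign_eq_sign_sub_of_strictMonoOn {f : ℝ → ℝ} {s : Set ℝ} (hf : StrictMonoOn f s)
    {x y : ℝ} (hx : x ∈ s) (hy : y ∈ s) (hx0 : f x = 0) :
    SignType.sign (f y) = SignType.sign (y - x) := by
  rcases lt_trichotomy y x with h | rfl | h
  · rw [sign_neg (hx0 ▸ hf hy hx h), sign_neg (sub_neg.mpr h)]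
  · rw [hx0, sub_self]
  · rw [sign_pos (hx0 ▸ hf hx hy h), sign_pos (sub_pos.mpr h)]

/-- Two functions are comonotone on a set if they are both strictly increasing or both strictly
decreasing there. -/
def StrictComonotoneOn (f g : ℝ → ℝ) (s : Set ℝ) : Prop :=
  (StrictMonoOn f s ∧ StrictMonoOn g s) ∨ (StrictAntiOn f s ∧ StrictAntiOn g s)

theorem exists_orderIso_sign_eq_of_strictMonoOn {f g : ℝ → ℝ} {a b : ℝ} (hab : a < b)
    (hf : ContinuousOn f (Icc a b)) (hg : ContinuousOn g (Icc a b))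
    (hfm : StrictMonoOn f (Icc a b)) (hgm : StrictMonoOn g (Icc a b))
    (ha : SignType.sign (f a) = SignType.sign (g a))
    (hb : SignType.sign (f b) = SignType.sign (g b)) :
    ∃ k : ℝ ≃o ℝ, EqOn k id (Ioo a b)ᶜ ∧
      ∀ y ∈ Icc a b, SignType.sign (f y) = SignType.sign (g (k y)) := by
  have a_mem : a ∈ Icc a b := left_mem_Icc.mpr hab.le
  have b_mem : b ∈ Icc a b := right_mem_Icc.mpr hab.le
  rcases le_or_gt 0 (f a) with hfa | hfa
  · have hga : 0 ≤ g a := by rwa [← sign_nonneg_iff, ← ha, sign_nonneg_iff]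
    refine ⟨OrderIso.refl ℝ, fun _ _ => rfl, fun y hy => ?_⟩
    rcases hy.1.eq_or_lt with rfl | hay
    · exact ha
    · exact (sign_pos (hfa.trans_lt (hfm a_mem hy hay))).trans
        (sign_pos (hga.trans_lt (hgm a_mem hy hay))).symm
  rcases le_or_gt (f b) 0 with hfb | hfb
  · have hgb : g b ≤ 0 := by rwa [← sign_nonpos_iff, ← hb, sign_nonpos_iff]
    refine ⟨OrderIso.refl ℝ, fun _ _ => rfl, fun y hy => ?_⟩
    rcases hy.2.eq_or_lt with rfl | hyb
    · exact hb
    · exact (sign_neg ((hfm hy b_mem hyb).trans_le hfb)).trans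
        (sign_neg ((hgm hy b_mem hyb).trans_le hgb)).symm
  have hga : g a < 0 := by rwa [← sign_eq_neg_one_iff, ← ha, sign_eq_neg_one_iff]
  have hgb : 0 < g b := by rwa [← sign_eq_one_iff, ← hb, sign_eq_one_iff]
  obtain ⟨x, hx, hx0⟩ := intermediate_value_Ioo hab.le hf ⟨hfa, hfb⟩
  obtain ⟨x', hx', hx'0⟩ := intermediate_value_Ioo hab.le hg ⟨hga, hgb⟩
  obtain ⟨k, rfl, hk⟩ := exists_orderIso_apply_eq hx hx'
  refine ⟨k, hk, fun y hy => ?_⟩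
  have k_sub_strictMono : StrictMono fun z => k z - k x := fun u v huv =>
    sub_lt_sub_right (k.strictMono huv) _
  calc SignType.sign (f y) = SignType.sign (y - x) :=
        sign_eq_sign_sub_of_strictMonoOn hfm (Ioo_subset_Icc_self hx) hy hx0
    _ = SignType.sign (k y - k x) := (sign_eq_sign_sub_of_strictMonoOn
        (k_sub_strictMono.strictMonoOn univ) (mem_univ x) (mem_univ y) (sub_self _)).symm
    _ = SignType.sign (g (k y)) := (sign_eq_sign_sub_of_strictMonoOn hgm
        (Ioo_subset_Icc_self hx') (orderIso_mem_Icc_of_eqOn_id hk hy) hx'0).symm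

theorem exists_orderIso_sign_eq_of_strictComonotoneOn {f g : ℝ → ℝ} {a b : ℝ} (hab : a < b)
    (hf : ContinuousOn f (Icc a b)) (hg : ContinuousOn g (Icc a b))
    (hfg : StrictComonotoneOn f g (Icc a b))
    (ha : SignType.sign (f a) = SignType.sign (g a))
    (hb : SignType.sign (f b) = SignType.sign (g b)) :
    ∃ k : ℝ ≃o ℝ, EqOn k id (Ioo a b)ᶜ ∧
      ∀ y ∈ Icc a b, SignType.sign (f y) = SignType.sign (g (k y)) := by
  rcases hfg with ⟨hfm, hgm⟩ | ⟨hfm, hgm⟩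
  · exact exists_orderIso_sign_eq_of_strictMonoOn hab hf hg hfm hgm ha hb
  · obtain ⟨k, hk, hsign⟩ := exists_orderIso_sign_eq_of_strictMonoOn hab hf.neg hg.neg hfm.neg
      hgm.neg (by simp only [Pi.neg_apply, Left.sign_neg, ha])
      (by simp only [Pi.neg_apply, Left.sign_neg, hb])
    refine ⟨k, hk, fun y hy => ?_⟩
    simpa only [Pi.neg_apply, Left.sign_neg, neg_inj] using hsign y hy

theorem rel_of_rel_gaps {α : Type*} [LinearOrder α] {r : α → α → Prop} (Z : Finset α)
    (hgap : ∀ a b, a < b → (∀ z ∈ Z, z ∉ Ioo a b) → r a b)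
    (htrans : ∀ a b, ∀ z ∈ Z, z ∈ Ioo a b → r a z → r z b → r a b) :
    ∀ a b, a < b → r a b := by
  induction Z using Finset.induction_on with
  | empty => exact fun a b hab => hgap a b hab (by simp only [Finset.notMem_empty, false_imp_iff,
      implies_true])
  | insert c Z _ ih =>
    refine ih (fun a b hab hZ => ?_) fun a b z hz => htrans a b z (Finset.mem_insert_of_mem hz)
    have gap : ∀ a' b', a ≤ a' → b' ≤ b → a' < b' → c ∉ Ioo a' b' → r a' b' :=
      fun a' b' ha hb h hc => hgap a' b' h <| Finset.forall_mem_insert _ _ _ |>.mpr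
        ⟨hc, fun z hz hz' => hZ z hz (Ioo_subset_Ioo ha hb hz')⟩
    by_cases hc : c ∈ Ioo a b
    · exact htrans a b c (Finset.mem_insert_self c Z) hc
        (gap a c le_rfl hc.2.le hc.1 fun h => h.2.false)
        (gap c b hc.1.le le_rfl hc.2 fun h => h.1.false)
    · exact gap a b le_rfl le_rfl hab hc

theorem exists_orderIso_sign_eq_on_Icc {f g : ℝ → ℝ} (hf : Continuous f) (hg : Continuous g)
    (Z : Finset ℝ) (hZ : ∀ z ∈ Z, SignType.sign (f z) = SignType.sign (g z))
    (hgap : ∀ a b, a < b → (∀ z ∈ Z, z ∉ Ioo a b) → StrictComonotoneOn f g (Icc a b))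
    {a b : ℝ} (hab : a < b) (ha : SignType.sign (f a) = SignType.sign (g a))
    (hb : SignType.sign (f b) = SignType.sign (g b)) :
    ∃ k : ℝ ≃o ℝ, EqOn k id (Ioo a b)ᶜ ∧ EqOn k id Z ∧
      ∀ y ∈ Icc a b, SignType.sign (f y) = SignType.sign (g (k y)) := by
  revert ha hb
  refine rel_of_rel_gaps (r := fun a b => SignType.sign (f a) = SignType.sign (g a) →
    SignType.sign (f b) = SignType.sign (g b) → ∃ k : ℝ ≃o ℝ, EqOn k id (Ioo a b)ᶜ ∧ EqOn k id Z ∧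
      ∀ y ∈ Icc a b, SignType.sign (f y) = SignType.sign (g (k y))) Z ?_ ?_ a b hab
  · intro a b hab hZ_gap ha hb
    obtain ⟨k, hk, hsign⟩ := exists_orderIso_sign_eq_of_strictComonotoneOn hab hf.continuousOn
      hg.continuousOn (hgap a b hab hZ_gap) ha hb
    exact ⟨k, hk, hk.mono fun z hz => hZ_gap z hz, hsign⟩
  · intro a b c hc hac_cb left right ha hb
    obtain ⟨k₁, hk₁, hk₁Z, hsign₁⟩ := left ha (hZ c hc)
    obtain ⟨k₂, hk₂, hk₂Z, hsign₂⟩ := right (hZ c hc) hb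
    have comp_fix : ∀ y, k₁ y = y → k₂ y = y → k₁.trans k₂ y = y := fun y h₁ h₂ => by
      rw [OrderIso.trans_apply, h₁, h₂]
    refine ⟨k₁.trans k₂, fun y hy => comp_fix y ?_ ?_, fun z hz => comp_fix z (hk₁Z hz) (hk₂Z hz),
      fun y hy => ?_⟩
    · exact hk₁ fun h => hy ⟨h.1, h.2.trans hac_cb.2⟩
    · exact hk₂ fun h => hy ⟨hac_cb.1.trans h.1, h.2⟩
    rw [OrderIso.trans_apply]
    rcases le_total y c with hyc | hcy
    · have hk₁y := orderIso_mem_Icc_of_eqOn_id hk₁ ⟨hy.1, hyc⟩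
      rw [hk₂ fun h => h.1.not_ge hk₁y.2]
      exact hsign₁ y ⟨hy.1, hyc⟩
    · rw [hk₁ fun h => h.2.not_ge hcy]
      exact hsign₂ y ⟨hcy, hy.2⟩

theorem exists_orderIso_sign_eq {f g : ℝ → ℝ} (hf : Continuous f) (hg : Continuous g)
    (Z : Finset ℝ) (hZ : ∀ z ∈ Z, SignType.sign (f z) = SignType.sign (g z))
    (hgap : ∀ a b, a < b → (∀ z ∈ Z, z ∉ Ioo a b) → StrictComonotoneOn f g (Icc a b))
    (htop : ∀ᶠ y in atTop, SignType.sign (f y) = SignType.sign (g y))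
    (hbot : ∀ᶠ y in atBot, SignType.sign (f y) = SignType.sign (g y)) :
    ∃ k : ℝ ≃o ℝ, EqOn k id Z ∧ ∀ y, SignType.sign (f y) = SignType.sign (g (k y)) := by
  obtain ⟨b, hb⟩ := eventually_atTop.mp htop
  obtain ⟨a, ha⟩ := eventually_atBot.mp hbot
  obtain ⟨a', haa', ha'b⟩ : ∃ a' ≤ a, a' < b := ⟨min a (b - 1), min_le_left _ _,
    (min_le_right _ _).trans_lt (sub_one_lt b)⟩
  obtain ⟨k, hk, hkZ, hsign⟩ := exists_orderIso_sign_eq_on_Icc hf hg Z hZ hgap ha'b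
    (ha a' haa') (hb b le_rfl)
  refine ⟨k, hkZ, fun y => ?_⟩
  rcases lt_or_ge y a' with hy | hy
  · rw [hk fun h => hy.not_gt h.1]
    exact ha y (hy.le.trans haa')
  rcases lt_or_ge b y with hy' | hy'
  · rw [hk fun h => hy'.not_gt h.2]
    exact hb y hy'.le
  · exact hsign y ⟨hy, hy'⟩

/-! ### Sign-matched polynomials -/

theorem eventually_atTop_sign_eval {A : ℝ[X]} (hA : 0 < A.natDegree) :
    ∀ᶠ y in atTop, SignType.sign (A.eval y) = SignType.sign A.leadingCoeff := by
  have hdeg : 0 < A.degree := Polynomial.natDegree_pos_iff_degree_pos.mp hA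
  have hlc : A.leadingCoeff ≠ 0 :=
    Polynomial.leadingCoeff_ne_zero.mpr (Polynomial.ne_zero_of_natDegree_gt hA)
  rcases lt_or_gt_of_ne hlc with h | h
  · filter_upwards [(A.tendsto_atBot_of_leadingCoeff_nonpos hdeg h.le).eventually_lt_atBot 0]
      with y hy
    rw [sign_neg hy, sign_neg h]
  · filter_upwards [(A.tendsto_atTop_of_leadingCoeff_nonneg hdeg h.le).eventually_gt_atTop 0]
      with y hy
    rw [sign_pos hy, sign_pos h]

theorem eventually_atBot_sign_eval {A : ℝ[X]} (hA : 0 < A.natDegree) :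
    ∀ᶠ y in atBot, SignType.sign (A.eval y) =
      SignType.sign A.leadingCoeff * SignType.sign ((-1 : ℝ) ^ A.natDegree) := by
  have hdeg : (A.comp (-Polynomial.X)).natDegree = A.natDegree := by
    rw [Polynomial.natDegree_comp, Polynomial.natDegree_neg, Polynomial.natDegree_X, mul_one]
  have hlc : (A.comp (-Polynomial.X)).leadingCoeff = A.leadingCoeff * (-1) ^ A.natDegree := by
    rw [Polynomial.leadingCoeff_comp (by simp), Polynomial.leadingCoeff_neg,
      Polynomial.leadingCoeff_X]
  filter_upwards [(tendsto_neg_atBot_atTop (G := ℝ)).eventually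
      (eventually_atTop_sign_eval (hdeg ▸ hA))] with y hy
  rwa [hlc, sign_mul, Polynomial.eval_comp, Polynomial.eval_neg, Polynomial.eval_X, neg_neg] at hy

/-- The polynomials `A` and `B` have the same sign at points of the line corresponding to each
other under `h`. For finitely many pairs sharing one `h`, this says that both families have the
same table of signs. -/
def SignMatch (h : ℝ ≃o ℝ) (A B : ℝ[X]) : Prop :=
  ∀ y, SignType.sign (A.eval y) = SignType.sign (B.eval (h y))

namespace SignMatch

variable {h : ℝ ≃o ℝ} {A B : ℝ[X]}

theorem eval_pos_iff (hAB : SignMatch h A B) (y : ℝ) : 0 < A.eval y ↔ 0 < B.eval (h y) := by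
  rw [← sign_eq_one_iff, hAB y, sign_eq_one_iff]

theorem neg (hAB : SignMatch h A B) : SignMatch h (-A) (-B) := fun y => by
  simp only [Polynomial.eval_neg, Left.sign_neg, hAB y]

theorem trans_of_fixes_roots (hAB : SignMatch h A B) {k : ℝ ≃o ℝ}
    (hk : A ≠ 0 → ∀ z, A.eval z = 0 → k z = z) : SignMatch (k.trans h) A B := fun y => by
  rw [OrderIso.trans_apply, ← hAB (k y)]
  by_cases hA : A = 0
  · rw [hA, Polynomial.eval_zero, Polynomial.eval_zero]
  · rw [sign_apply_orderIso_of_fixes_zeros A.continuous (hk hA)]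

theorem strictMonoOn_of_derivative_pos (hAB : SignMatch h A.derivative B.derivative) {a b : ℝ}
    (hpos : ∀ y ∈ Ioo a b, 0 < A.derivative.eval y) :
    StrictMonoOn (fun y => A.eval y) (Icc a b) ∧
      StrictMonoOn (fun y => B.eval (h y)) (Icc a b) := by
  constructor
  · refine strictMonoOn_of_deriv_pos (convex_Icc a b) A.continuousOn fun y hy => ?_
    rw [interior_Icc] at hy
    rw [Polynomial.deriv]
    exact hpos y hy
  · have mono : StrictMonoOn (fun y => B.eval y) (Icc (h a) (h b)) := by
      refine strictMonoOn_of_deriv_pos (convex_Icc _ _) B.continuousOn fun y hy => ?_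
      rw [interior_Icc, ← h.apply_symm_apply y] at hy
      rw [Polynomial.deriv, ← h.apply_symm_apply y, ← hAB.eval_pos_iff]
      exact hpos _ ⟨h.lt_iff_lt.mp hy.1, h.lt_iff_lt.mp hy.2⟩
    exact fun x hx y hy hxy => mono ⟨h.monotone hx.1, h.monotone hx.2⟩
      ⟨h.monotone hy.1, h.monotone hy.2⟩ (h.strictMono hxy)

theorem strictComonotoneOn (hAB : SignMatch h A.derivative B.derivative) {a b : ℝ}
    (hne : ∀ y ∈ Ioo a b, A.derivative.eval y ≠ 0) :
    StrictComonotoneOn (fun y => A.eval y) (fun y => B.eval (h y)) (Icc a b) := by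
  rcases hasDerivWithinAt_forall_lt_or_forall_gt_of_forall_ne (convex_Ioo a b)
    (fun y _ => A.hasDerivWithinAt y _) hne with hneg | hpos
  · have hAB' : SignMatch h (-A).derivative (-B).derivative := by
      simpa only [Polynomial.derivative_neg] using hAB.neg
    obtain ⟨hA, hB⟩ := hAB'.strictMonoOn_of_derivative_pos (a := a) (b := b) fun y hy => by
      simpa only [Polynomial.derivative_neg, Polynomial.eval_neg, neg_pos] using hneg y hy
    simp only [Polynomial.eval_neg] at hA hB
    exact Or.inr ⟨by simpa using hA.neg, by simpa using hB.neg⟩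
  · exact Or.inl (hAB.strictMonoOn_of_derivative_pos hpos)

theorem exists_insert {ι : Type*} (s : Finset ι) {A B : ι → ℝ[X]}
    (hAB : ∀ i ∈ s, SignMatch h (A i) (B i)) {p q : ℝ[X]} (hp : 0 < p.natDegree)
    (hdeg : q.natDegree = p.natDegree)
    (hlc : SignType.sign p.leadingCoeff = SignType.sign q.leadingCoeff)
    {d : ι} (hd : d ∈ s) (hdA : A d = p.derivative) (hdB : B d = q.derivative)
    (hroot : ∀ i ∈ s, ∀ z, A i ≠ 0 → (A i).eval z = 0 →
      SignType.sign (p.eval z) = SignType.sign (q.eval (h z))) :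
    ∃ h' : ℝ ≃o ℝ, SignMatch h' p q ∧ ∀ i ∈ s, SignMatch h' (A i) (B i) := by
  have mem_Z : ∀ z, z ∈ s.biUnion (fun i => (A i).roots.toFinset) ↔
      ∃ i ∈ s, A i ≠ 0 ∧ (A i).eval z = 0 := fun z => by
    simp only [Finset.mem_biUnion, Multiset.mem_toFinset, Polynomial.mem_roots', Polynomial.IsRoot]
  have derivative_ne_zero : A d ≠ 0 := by
    rw [hdA, Ne, Polynomial.derivative_eq_zero]
    exact hp.ne'
  obtain ⟨k, hkZ, hk⟩ := exists_orderIso_sign_eq (f := fun y => p.eval y)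
    (g := fun y => q.eval (h y)) p.continuous (q.continuous.comp h.continuous)
    (s.biUnion fun i => (A i).roots.toFinset)
    (fun z hz => by
      obtain ⟨i, hi, hi0, hz⟩ := (mem_Z z).mp hz
      exact hroot i hi z hi0 hz)
    (fun a b _ hZ => strictComonotoneOn (hdA ▸ hdB ▸ hAB d hd) fun y hy hy0 =>
      hZ y ((mem_Z y).mpr ⟨d, hd, derivative_ne_zero, hdA ▸ hy0⟩) hy)
    (by
      filter_upwards [eventually_atTop_sign_eval hp,
        h.tendsto_atTop.eventually (eventually_atTop_sign_eval (hdeg ▸ hp))] with y hpy hqy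
      rw [hpy, hqy, hlc])
    (by
      filter_upwards [eventually_atBot_sign_eval hp,
        h.tendsto_atBot.eventually (eventually_atBot_sign_eval (hdeg ▸ hp))] with y hpy hqy
      rw [hpy, hqy, hlc, hdeg])
  exact ⟨k.trans h, hk, fun i hi => (hAB i hi).trans_of_fixes_roots fun hi0 z hz =>
    hkZ ((mem_Z z).mpr ⟨i, hi, hi0, hz⟩)⟩

end SignMatch

/-! ### Quantifier elimination -/

theorem exists_finite_superset_closed_of_rank_lt {α : Type*} (rank : α → ℕ) {next : α → α → Set α}
    (hfin : ∀ p q, (next p q).Finite) (hrank : ∀ p q, ∀ r ∈ next p q, rank r < rank q)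
    {S : Set α} (hS : S.Finite) :
    ∃ T : Set α, S ⊆ T ∧ T.Finite ∧ ∀ p ∈ T, ∀ q ∈ T, rank q ≤ rank p → next p q ⊆ T := by
  let ClosedFrom (n : ℕ) : Prop := ∃ T : Set α, S ⊆ T ∧ T.Finite ∧
    ∀ p ∈ T, ∀ q ∈ T, n ≤ rank q → rank q ≤ rank p → next p q ⊆ T
  have closedFrom_of_succ : ∀ n, ClosedFrom (n + 1) → ClosedFrom n := by
    rintro n ⟨T, hST, hT, hclosed⟩
    let new : Set α := ⋃ p ∈ T, ⋃ q ∈ {q ∈ T | rank q = n}, next p q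
    have rank_new : ∀ r ∈ new, rank r < n := by
      simp only [new, mem_iUnion, exists_prop]
      rintro r ⟨p, _, q, ⟨_, rfl⟩, hr⟩
      exact hrank p q r hr
    refine ⟨T ∪ new, hST.trans subset_union_left, hT.union (hT.biUnion fun p _ =>
      (hT.sep _).biUnion fun q _ => hfin p q), fun p hp q hq hnq hqp => ?_⟩
    replace hp : p ∈ T := hp.resolve_right fun h => (rank_new p h).not_ge (hnq.trans hqp)
    replace hq : q ∈ T := hq.resolve_right fun h => (rank_new q h).not_ge hnq
    rcases hnq.eq_or_lt with hn | hn
    · exact (subset_biUnion_of_mem (u := fun q => next p q)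
        (show q ∈ {q ∈ T | rank q = n} from ⟨hq, hn.symm⟩)).trans
        ((subset_biUnion_of_mem (u := fun p => ⋃ q ∈ {q ∈ T | rank q = n}, next p q) hp).trans
          subset_union_right)
    · exact (hclosed p hp q hq hn hqp).trans subset_union_left
  have closedFrom_zero : ∀ n, ClosedFrom n → ClosedFrom 0 := fun n => by
    induction n with
    | zero => exact id
    | succ n ih => exact fun h => ih (closedFrom_of_succ n h)
  obtain ⟨N, hN⟩ := (hS.image rank).bddAbove
  obtain ⟨T, hST, hT, hclosed⟩ := closedFrom_zero (N + 1) ⟨S, subset_rfl, hS, fun _ _ q hq h =>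
    absurd (hN (mem_image_of_mem rank hq)) (by lia)⟩
  exact ⟨T, hST, hT, fun p hp q hq => hclosed p hp q hq (Nat.zero_le _)⟩

section QuantifierElimination

variable {R : Type*} [CommRing R]

theorem exists_pseudo_div_rem {q : R[X]} (hq : 0 < q.natDegree) (p : R[X]) :
    ∃ (m : ℕ) (k r : R[X]), Polynomial.C (q.leadingCoeff ^ m) * p = q * k + r ∧
      r.natDegree < q.natDegree := by
  induction hn : p.natDegree using Nat.strong_induction_on generalizing p with
  | _ n ih =>
    rcases lt_or_ge p.natDegree q.natDegree with hlt | hle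
    · exact ⟨0, 0, p, by simp, hlt⟩
    obtain ⟨m, k, r, hdiv, hr⟩ := ih _ (hn ▸
      Polynomial.natDegree_cancelLeads_lt_of_natDegree_le_natDegree hle (hq.trans_le hle)) _ rfl
    refine ⟨m + 1, k + Polynomial.C (q.leadingCoeff ^ m) *
      (Polynomial.C p.leadingCoeff * Polynomial.X ^ (p.natDegree - q.natDegree)), r, ?_, hr⟩
    rw [Polynomial.cancelLeads, Nat.sub_eq_zero_of_le hle] at hdiv
    rw [pow_succ, Polynomial.C_mul]
    linear_combination hdiv

theorem natDegree_eraseLead_lt {q : R[X]} (hq : 0 < q.natDegree) :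
    q.eraseLead.natDegree < q.natDegree :=
  q.eraseLead_natDegree_le.trans_lt (Nat.sub_lt hq one_pos)

theorem mem_of_mem_insert_of_natDegree_lt {s : Set R[X]} {p q : R[X]} (hq : q ∈ insert p s)
    (hqp : q.natDegree < p.natDegree) : q ∈ s :=
  hq.resolve_left fun h => hqp.ne (congrArg Polynomial.natDegree h)

/-- A set of polynomials is remainder-closed if it contains the derivatives, the truncations and
the mutual pseudo-remainders of its nonconstant members. The sign table of a finite
remainder-closed set is determined by the signs of the coefficients. -/
structure IsRemainderClosed (s : Set R[X]) : Prop where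
  derivative_mem : ∀ q ∈ s, 0 < q.natDegree → q.derivative ∈ s
  eraseLead_mem : ∀ q ∈ s, 0 < q.natDegree → q.eraseLead ∈ s
  exists_remainder_mem : ∀ p ∈ s, ∀ q ∈ s, 0 < q.natDegree → q.natDegree ≤ p.natDegree →
    ∃ r ∈ s, r.natDegree < q.natDegree ∧
      ∃ (m : ℕ) (k : R[X]), Polynomial.C (q.leadingCoeff ^ m) * p = q * k + r

theorem exists_finite_isRemainderClosed {S : Set R[X]} (hS : S.Finite) :
    ∃ T : Set R[X], S ⊆ T ∧ T.Finite ∧ IsRemainderClosed T := by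
  choose! m k r hdiv hr using fun (p q : R[X]) (hq : 0 < q.natDegree) => exists_pseudo_div_rem hq p
  obtain ⟨T, hST, hT, hclosed⟩ := exists_finite_superset_closed_of_rank_lt Polynomial.natDegree
    (next := fun p q => {f ∈ {q.derivative, q.eraseLead, r p q} | f.natDegree < q.natDegree})
    (fun p q => (toFinite _).sep _) (fun p q f hf => hf.2) hS
  refine ⟨T, hST, hT, fun q hq hq0 => ?_, fun q hq hq0 => ?_, fun p hp q hq hq0 hqp => ?_⟩
  · exact hclosed q hq q hq le_rfl ⟨Or.inl rfl, Polynomial.natDegree_derivative_lt hq0.ne'⟩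
  · exact hclosed q hq q hq le_rfl ⟨Or.inr (Or.inl rfl), natDegree_eraseLead_lt hq0⟩
  · exact ⟨r p q, hclosed p hp q hq hqp ⟨Or.inr (Or.inr rfl), hr p q hq0⟩, hr p q hq0, m p q, k p q,
      hdiv p q hq0⟩

theorem IsRemainderClosed.of_insert {s : Set R[X]} {p : R[X]}
    (hs : IsRemainderClosed (insert p s)) (hp : ∀ q ∈ s, q.natDegree ≤ p.natDegree) :
    IsRemainderClosed s := by
  have mem_of_lt : ∀ q ∈ s, ∀ r ∈ insert p s, r.natDegree < q.natDegree → r ∈ s :=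
    fun q hq r hr hrq => mem_of_mem_insert_of_natDegree_lt hr (hrq.trans_le (hp q hq))
  refine ⟨fun q hq hq0 => ?_, fun q hq hq0 => ?_, fun f hf q hq hq0 hqf => ?_⟩
  · exact mem_of_lt q hq _ (hs.derivative_mem q (mem_insert_of_mem p hq) hq0)
      (Polynomial.natDegree_derivative_lt hq0.ne')
  · exact mem_of_lt q hq _ (hs.eraseLead_mem q (mem_insert_of_mem p hq) hq0)
      (natDegree_eraseLead_lt hq0)
  · obtain ⟨r, hr, hrq, hdiv⟩ := hs.exists_remainder_mem f (mem_insert_of_mem p hf) q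
      (mem_insert_of_mem p hq) hq0 hqf
    exact ⟨r, mem_of_lt q hq r hr hrq, hrq, hdiv⟩

theorem map_eraseLead_of_map_leadingCoeff_eq_zero {S : Type*} [Semiring S] {e : R →+* S}
    {q : R[X]} (hq : e q.leadingCoeff = 0) : q.eraseLead.map e = q.map e := by
  conv_rhs => rw [← q.eraseLead_add_C_mul_X_pow]
  rw [Polynomial.map_add, Polynomial.map_mul, Polynomial.map_C, hq, Polynomial.C_0, zero_mul,
    add_zero]

section SignsOfSpecializations

variable {e e' : R →+* ℝ}

theorem sign_eval_map_eq_of_remainder {p q k r : R[X]} {m : ℕ}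
    (hdiv : Polynomial.C (q.leadingCoeff ^ m) * p = q * k + r)
    (hlc : SignType.sign (e q.leadingCoeff) = SignType.sign (e' q.leadingCoeff))
    (hlc0 : e q.leadingCoeff ≠ 0) {x y : ℝ} (hx : (q.map e).eval x = 0)
    (hy : (q.map e').eval y = 0)
    (hr : SignType.sign ((r.map e).eval x) = SignType.sign ((r.map e').eval y)) :
    SignType.sign ((p.map e).eval x) = SignType.sign ((p.map e').eval y) := by
  have eval_rem : ∀ (f : R →+* ℝ) (z : ℝ), (q.map f).eval z = 0 →
      f q.leadingCoeff ^ m * (p.map f).eval z = (r.map f).eval z := fun f z hz => by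
    simpa [hz] using congrArg (fun g => (g.map f).eval z) hdiv
  rw [← eval_rem e x hx, ← eval_rem e' y hy, sign_mul, sign_mul, sign_pow, sign_pow, ← hlc] at hr
  exact mul_left_cancel₀ (pow_ne_zero m (sign_ne_zero.mpr hlc0)) hr

theorem sign_eval_map_eq_of_root {s : Set R[X]} {p : R[X]}
    (hs : IsRemainderClosed (insert p s)) {h : ℝ ≃o ℝ}
    (hmatch : ∀ q ∈ s, SignMatch h (q.map e) (q.map e'))
    (hlc : ∀ q ∈ s, SignType.sign (e q.leadingCoeff) = SignType.sign (e' q.leadingCoeff))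
    {q : R[X]} (hq : q ∈ s) (hqp : q.natDegree ≤ p.natDegree) {z : ℝ} (hq0 : q.map e ≠ 0)
    (hz : (q.map e).eval z = 0) :
    SignType.sign ((p.map e).eval z) = SignType.sign ((p.map e').eval (h z)) := by
  induction hn : q.natDegree using Nat.strong_induction_on generalizing q with
  | _ n ih =>
    have q_mem := mem_insert_of_mem p hq
    rcases Nat.eq_zero_or_pos q.natDegree with hdeg | hdeg
    · rw [Polynomial.eq_C_of_natDegree_eq_zero hdeg, Polynomial.map_C] at hq0 hz
      rw [Polynomial.eval_C] at hz
      exact absurd (by rw [hz, Polynomial.C_0]) hq0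
    by_cases hlc0 : e q.leadingCoeff = 0
    · have map_eq := map_eraseLead_of_map_leadingCoeff_eq_zero hlc0
      have hlt : q.eraseLead.natDegree < q.natDegree := natDegree_eraseLead_lt hdeg
      exact ih _ (hn ▸ hlt) (mem_of_mem_insert_of_natDegree_lt
        (hs.eraseLead_mem q q_mem hdeg) (hlt.trans_le hqp))
        (hlt.le.trans hqp) (map_eq ▸ hq0) (map_eq ▸ hz) rfl
    · obtain ⟨r, hr, hrq, m, k, hdiv⟩ :=
        hs.exists_remainder_mem p (mem_insert p s) q q_mem hdeg hqp
      have hz' : (q.map e').eval (h z) = 0 := by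
        rw [← sign_eq_zero_iff, ← hmatch q hq z, hz, sign_zero]
      exact sign_eval_map_eq_of_remainder hdiv (hlc q hq) hlc0 hz hz'
        (hmatch r (mem_of_mem_insert_of_natDegree_lt hr (hrq.trans_le hqp)) z)

theorem exists_signMatch_insert {s : Finset R[X]} {p : R[X]}
    (hs : IsRemainderClosed (insert p (s : Set R[X])))
    (hdeg : ∀ q ∈ s, q.natDegree ≤ p.natDegree)
    (hlc : ∀ q ∈ insert p (s : Set R[X]),
      SignType.sign (e q.leadingCoeff) = SignType.sign (e' q.leadingCoeff))
    {h : ℝ ≃o ℝ} (hmatch : ∀ q ∈ s, SignMatch h (q.map e) (q.map e')) :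
    ∃ h' : ℝ ≃o ℝ, SignMatch h' (p.map e) (p.map e') ∧
      ∀ q ∈ s, SignMatch h' (q.map e) (q.map e') := by
  have p_mem := mem_insert p (s : Set R[X])
  have lc_p := hlc p p_mem
  rcases Nat.eq_zero_or_pos p.natDegree with hp0 | hp0
  · refine ⟨h, fun y => ?_, hmatch⟩
    rw [Polynomial.leadingCoeff, hp0] at lc_p
    rw [Polynomial.eq_C_of_natDegree_eq_zero hp0]
    simpa only [Polynomial.map_C, Polynomial.eval_C] using lc_p
  by_cases hlc0 : e p.leadingCoeff = 0
  · have hlc0' : e' p.leadingCoeff = 0 := by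
      rwa [hlc0, sign_zero, eq_comm, sign_eq_zero_iff] at lc_p
    refine ⟨h, ?_, hmatch⟩
    rw [← map_eraseLead_of_map_leadingCoeff_eq_zero hlc0,
      ← map_eraseLead_of_map_leadingCoeff_eq_zero hlc0']
    exact hmatch _ (mem_of_mem_insert_of_natDegree_lt (hs.eraseLead_mem p p_mem hp0)
      (natDegree_eraseLead_lt hp0))
  have hlc0' : e' p.leadingCoeff ≠ 0 := by
    rwa [← sign_ne_zero, ← lc_p, sign_ne_zero]
  have degree_map := Polynomial.natDegree_map_of_leadingCoeff_ne_zero e hlc0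
  refine SignMatch.exists_insert s hmatch (d := p.derivative) (degree_map ▸ hp0) ?_ ?_
    (mem_of_mem_insert_of_natDegree_lt (hs.derivative_mem p p_mem hp0)
      (Polynomial.natDegree_derivative_lt hp0.ne'))
    (Polynomial.derivative_map p e).symm (Polynomial.derivative_map p e').symm
    fun q hq z hq0 hz => sign_eval_map_eq_of_root hs hmatch
      (fun r hr => hlc r (mem_insert_of_mem p hr)) hq (hdeg q hq) hq0 hz
  · rw [degree_map, Polynomial.natDegree_map_of_leadingCoeff_ne_zero e' hlc0']
  · rwa [Polynomial.leadingCoeff_map_of_leadingCoeff_ne_zero e hlc0,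
      Polynomial.leadingCoeff_map_of_leadingCoeff_ne_zero e' hlc0']

theorem IsRemainderClosed.exists_signMatch {s : Finset R[X]}
    (hs : IsRemainderClosed (s : Set R[X]))
    (hlc : ∀ q ∈ s, SignType.sign (e q.leadingCoeff) = SignType.sign (e' q.leadingCoeff)) :
    ∃ h : ℝ ≃o ℝ, ∀ q ∈ s, SignMatch h (q.map e) (q.map e') := by
  classical
  induction s using Finset.induction_on_max_value (Polynomial.natDegree (R := R)) with
  | empty => exact ⟨OrderIso.refl ℝ, fun q hq => absurd hq (Finset.notMem_empty q)⟩
  | insert p s _ hdeg ih =>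
    rw [Finset.coe_insert] at hs
    obtain ⟨h, hmatch⟩ := ih (hs.of_insert hdeg) fun q hq => hlc q (Finset.mem_insert_of_mem hq)
    obtain ⟨h', hp, hmatch'⟩ := exists_signMatch_insert hs hdeg
      (fun q hq => hlc q (by simpa using hq)) hmatch
    exact ⟨h', (Finset.forall_mem_insert _ _ _).mpr ⟨hp, hmatch'⟩⟩

end SignsOfSpecializations

theorem exists_finite_forall_exists_signMatch {S : Set R[X]} (hS : S.Finite) :
    ∃ F : Set R, F.Finite ∧ ∀ e e' : R →+* ℝ,
      (∀ c ∈ F, SignType.sign (e c) = SignType.sign (e' c)) →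
        ∃ h : ℝ ≃o ℝ, ∀ q ∈ S, SignMatch h (q.map e) (q.map e') := by
  obtain ⟨T, hST, hT, hclosed⟩ := exists_finite_isRemainderClosed hS
  lift T to Finset R[X] using hT
  refine ⟨Polynomial.leadingCoeff '' T, T.finite_toSet.image _, fun e e' hF => ?_⟩
  obtain ⟨h, hh⟩ := hclosed.exists_signMatch fun q hq => hF _ (mem_image_of_mem _ hq)
  exact ⟨h, fun q hq => hh q (hST hq)⟩

end QuantifierElimination

/-! ### Semialgebraic predicates -/

/-- A function on a power of `ℝ` is polynomial if it is the evaluation of a polynomial. As a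
predicate on functions, unlike `MvPolynomial` itself, this is accessible to `fun_prop`. -/
@[fun_prop]
def IsPolynomialFun {ι : Type*} (t : (ι → ℝ) → ℝ) : Prop :=
  ∃ p : MvPolynomial ι ℝ, ∀ x, eval x p = t x

namespace IsPolynomialFun

variable {ι : Type*} {s t : (ι → ℝ) → ℝ}

@[fun_prop]
theorem apply (i : ι) : IsPolynomialFun fun x : ι → ℝ => x i :=
  ⟨X i, fun _ => eval_X i⟩

@[fun_prop]
theorem const (c : ℝ) : IsPolynomialFun fun _ : ι → ℝ => c :=
  ⟨C c, fun _ => eval_C c⟩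

@[fun_prop]
theorem sub (hs : IsPolynomialFun s) (ht : IsPolynomialFun t) :
    IsPolynomialFun fun x => s x - t x := by
  obtain ⟨p, hp⟩ := hs
  obtain ⟨q, hq⟩ := ht
  exact ⟨p - q, fun x => by rw [eval_sub, hp, hq]⟩

@[fun_prop]
theorem mul (hs : IsPolynomialFun s) (ht : IsPolynomialFun t) :
    IsPolynomialFun fun x => s x * t x := by
  obtain ⟨p, hp⟩ := hs
  obtain ⟨q, hq⟩ := ht
  exact ⟨p * q, fun x => by rw [eval_mul, hp, hq]⟩

@[fun_prop]
theorem neg (hs : IsPolynomialFun s) : IsPolynomialFun fun x => -s x := by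
  obtain ⟨p, hp⟩ := hs
  exact ⟨-p, fun x => by rw [eval_neg, hp]⟩

@[fun_prop]
theorem pow (hs : IsPolynomialFun s) (n : ℕ) : IsPolynomialFun fun x => s x ^ n := by
  obtain ⟨p, hp⟩ := hs
  exact ⟨p ^ n, fun x => by rw [eval_pow, hp]⟩

end IsPolynomialFun

/-- A predicate on a power of `ℝ` is semialgebraic if its truth at a point depends only on the
signs of finitely many polynomials there. For a predicate `· ∈ S` this amounts to
`IsSemialgebraic S`, but unlike the latter it allows arbitrary index types, so that variables can be
quantified without reindexing. -/
def SemialgebraicPred {ι : Type*} (p : (ι → ℝ) → Prop) : Prop :=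
  ∃ F : Set (MvPolynomial ι ℝ), F.Finite ∧ ∀ x y : ι → ℝ,
    (∀ f ∈ F, SignType.sign (eval x f) = SignType.sign (eval y f)) → p x → p y

theorem eval_map_optionEquivLeft {R ι : Type*} [CommSemiring R] (f : MvPolynomial (Option ι) R)
    (x : ι → R) (y : R) :
    ((optionEquivLeft R ι f).map (eval x)).eval y = eval (fun o => o.elim y x) f := by
  induction f using MvPolynomial.induction_on with
  | C a => simp
  | add p q hp hq => simp [hp, hq]
  | mul_X p i hp => cases i <;> simp [hp]

namespace SemialgebraicPred

variable {ι κ : Type*} {p q : (ι → ℝ) → Prop} {s t : (ι → ℝ) → ℝ}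

theorem not (hp : SemialgebraicPred p) : SemialgebraicPred fun x => ¬p x := by
  obtain ⟨F, hF, h⟩ := hp
  exact ⟨F, hF, fun x y hxy hpx hpy => hpx (h y x (fun f hf => (hxy f hf).symm) hpy)⟩

theorem and (hp : SemialgebraicPred p) (hq : SemialgebraicPred q) :
    SemialgebraicPred fun x => p x ∧ q x := by
  obtain ⟨F, hF, hp⟩ := hp
  obtain ⟨G, hG, hq⟩ := hq
  exact ⟨F ∪ G, hF.union hG, fun x y hxy => And.imp (hp x y fun f hf => hxy f (Or.inl hf))
    (hq x y fun f hf => hxy f (Or.inr hf))⟩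

theorem congr (hp : SemialgebraicPred p) (h : ∀ x, q x ↔ p x) : SemialgebraicPred q := by
  rwa [funext fun x => propext (h x)]

theorem imp (hp : SemialgebraicPred p) (hq : SemialgebraicPred q) :
    SemialgebraicPred fun x => p x → q x :=
  (hp.and hq.not).not.congr fun _ => by tauto

theorem forall_finite [Finite κ] {p : κ → (ι → ℝ) → Prop} (hp : ∀ k, SemialgebraicPred (p k)) :
    SemialgebraicPred fun x => ∀ k, p k x := by
  choose F hF h using hp
  exact ⟨⋃ k, F k, finite_iUnion hF, fun x y hxy hx k =>
    h k x y (fun f hf => hxy f (mem_iUnion_of_mem k hf)) (hx k)⟩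

theorem lt (hs : IsPolynomialFun s) (ht : IsPolynomialFun t) :
    SemialgebraicPred fun x => s x < t x := by
  obtain ⟨p, hp⟩ := ht.sub hs
  refine ⟨{p}, finite_singleton p, fun x y hxy h => ?_⟩
  beta_reduce at h hp ⊢
  rw [← sub_pos, ← hp, ← sign_eq_one_iff] at h ⊢
  rwa [← hxy p rfl]

theorem le (hs : IsPolynomialFun s) (ht : IsPolynomialFun t) :
    SemialgebraicPred fun x => s x ≤ t x :=
  (lt ht hs).not.congr fun _ => not_lt.symm

theorem eq (hs : IsPolynomialFun s) (ht : IsPolynomialFun t) :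
    SemialgebraicPred fun x => s x = t x :=
  ((le hs ht).and (le ht hs)).congr fun _ => le_antisymm_iff

theorem eq_div {r : (ι → ℝ) → ℝ} (hr : IsPolynomialFun r) (hs : IsPolynomialFun s)
    (ht : IsPolynomialFun t) : SemialgebraicPred fun x => r x = s x / t x :=
  ((eq ht (.const 0)).imp (eq hr (.const 0)) |>.and
    ((eq ht (.const 0)).not.imp (eq (hr.mul ht) hs))).congr fun x => by
      by_cases h : t x = 0 <;> simp [h, eq_div_iff]

theorem abs_le (hs : IsPolynomialFun s) (ht : IsPolynomialFun t) :
    SemialgebraicPred fun x => |s x| ≤ t x :=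
  ((le ht.neg hs).and (le hs ht)).congr fun _ => _root_.abs_le

theorem abs_lt (hs : IsPolynomialFun s) (ht : IsPolynomialFun t) :
    SemialgebraicPred fun x => |s x| < t x :=
  ((lt ht.neg hs).and (lt hs ht)).congr fun _ => _root_.abs_lt

theorem dist_lt [Fintype κ] {f g : (ι → ℝ) → κ → ℝ} (hf : ∀ k, IsPolynomialFun fun x => f x k)
    (hg : ∀ k, IsPolynomialFun fun x => g x k) (ht : IsPolynomialFun t) :
    SemialgebraicPred fun x => dist (f x) (g x) < t x :=
  ((lt (.const 0) ht).and (forall_finite fun k => abs_lt ((hf k).sub (hg k)) ht)).congr fun _ =>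
    ⟨fun h => have h0 := dist_nonneg.trans_lt h; ⟨h0, (dist_pi_lt_iff h0).mp h⟩,
      fun h => (dist_pi_lt_iff h.1).mpr h.2⟩

theorem norm_le_one [Fintype κ] {f : (ι → ℝ) → κ → ℝ} (hf : ∀ k, IsPolynomialFun fun x => f x k) :
    SemialgebraicPred fun x => ‖f x‖ ≤ 1 :=
  (forall_finite fun k => abs_le (hf k) (.const 1)).congr fun _ =>
    pi_norm_le_iff_of_nonneg zero_le_one

theorem comp {p : (κ → ℝ) → Prop} (hp : SemialgebraicPred p) {t : κ → (ι → ℝ) → ℝ}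
    (ht : ∀ k, IsPolynomialFun (t k)) : SemialgebraicPred fun x => p fun k => t k x := by
  obtain ⟨F, hF, h⟩ := hp
  choose T hT using ht
  have eval_bind (x : ι → ℝ) (f : MvPolynomial κ ℝ) :
      eval x (bind₁ T f) = eval (fun k => t k x) f := by
    simp only [eval, eval₂Hom_bind₁]
    exact congrArg (fun v => eval v f) (funext fun k => hT k x)
  refine ⟨bind₁ T '' F, hF.image _, fun x y hxy => h _ _ fun f hf => ?_⟩
  rw [← eval_bind, ← eval_bind]
  exact hxy _ (mem_image_of_mem _ hf)

theorem exists_real {p : (ι → ℝ) → ℝ → Prop}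
    (hp : SemialgebraicPred fun v : Option ι → ℝ => p (fun i => v (some i)) (v none)) :
    SemialgebraicPred fun x => ∃ y, p x y := by
  obtain ⟨F, hF, h⟩ := hp
  obtain ⟨G, hG, hmatch⟩ := exists_finite_forall_exists_signMatch (hF.image (optionEquivLeft ℝ ι))
  refine ⟨G, hG, fun x x' hx ⟨y, hy⟩ => ?_⟩
  obtain ⟨k, hk⟩ := hmatch (eval x) (eval x') hx
  refine ⟨k y, h (fun o => o.elim y x) (fun o => o.elim (k y) x') (fun f hf => ?_) hy⟩
  rw [← eval_map_optionEquivLeft, ← eval_map_optionEquivLeft]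
  exact hk _ (mem_image_of_mem _ hf) y

theorem forall_real {p : (ι → ℝ) → ℝ → Prop}
    (hp : SemialgebraicPred fun v : Option ι → ℝ => p (fun i => v (some i)) (v none)) :
    SemialgebraicPred fun x => ∀ y, p x y :=
  (exists_real (p := fun x y => ¬p x y) hp.not).not.congr fun _ => not_exists_not.symm

theorem exists_pi [Finite κ] {p : (ι → ℝ) → (κ → ℝ) → Prop}
    (hp : SemialgebraicPred fun v : ι ⊕ κ → ℝ => p (fun i => v (.inl i)) fun k => v (.inr k)) :
    SemialgebraicPred fun x => ∃ y, p x y := by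
  induction κ using Finite.induction_empty_option generalizing ι with
  | @of_equiv α β e ih =>
    have hpe := hp.comp (t := fun k (v : ι ⊕ α → ℝ) =>
      Sum.elim (fun i => v (Sum.inl i)) (fun b => v (Sum.inr (e.symm b))) k)
      (by rintro (i | k) <;> exact .apply _)
    exact (ih (p := fun x y => p x (y ∘ e.symm)) hpe).congr fun x =>
      (e.arrowCongr (Equiv.refl ℝ)).surjective.exists
  | h_empty =>
    have hp' := hp.comp (t := fun k (v : ι → ℝ) => Sum.elim v PEmpty.elim k)
      (by rintro (i | k); exacts [.apply i, k.elim])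
    exact hp'.congr fun x =>
      ⟨fun ⟨y, hy⟩ => Subsingleton.elim y PEmpty.elim ▸ hy, fun hy => ⟨_, hy⟩⟩
  | @h_option α _ ih =>
    have hp' := hp.comp (t := fun k (v : Option ι ⊕ α → ℝ) =>
      Sum.elim (fun i => v (Sum.inl (some i)))
        (fun o => o.elim (v (Sum.inl none)) fun k => v (Sum.inr k)) k)
      (by rintro (i | (_ | k)) <;> exact .apply _)
    exact (exists_real (p := fun x a => ∃ y : α → ℝ, p x fun o => o.elim a y) (ih
      (p := fun v y => p (fun i => v (some i)) fun o => o.elim (v none) y) hp')).congr fun x =>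
        ⟨fun ⟨y, hy⟩ => ⟨y none, fun k => y (some k), by convert hy with (_ | _) <;> rfl⟩,
          fun ⟨_, _, hy⟩ => ⟨_, hy⟩⟩

theorem forall_pi [Finite κ] {p : (ι → ℝ) → (κ → ℝ) → Prop}
    (hp : SemialgebraicPred fun v : ι ⊕ κ → ℝ => p (fun i => v (.inl i)) fun k => v (.inr k)) :
    SemialgebraicPred fun x => ∀ y, p x y :=
  (exists_pi (p := fun x y => ¬p x y) hp.not).not.congr fun _ => not_exists_not.symm

theorem mem_closure [Finite ι] {V : Set (ι → ℝ)} (hV : SemialgebraicPred (· ∈ V)) :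
    SemialgebraicPred (· ∈ closure V) := by
  have := Fintype.ofFinite ι
  have : SemialgebraicPred fun z => ∀ ε : ℝ, 0 < ε → ∃ w, w ∈ V ∧ dist w z < ε :=
    .forall_real (.imp (.lt (by fun_prop) (by fun_prop))
      (.exists_pi (p := fun v w => w ∈ V ∧ dist w (fun i => v (some i)) < v none)
        (.and (hV.comp (by fun_prop)) (.dist_lt (by fun_prop) (by fun_prop) (by fun_prop)))))
  exact this.congr fun z => mem_closure_iff_nhds_basis Metric.nhds_basis_ball

end SemialgebraicPred

/-! ### Semialgebraic sets and functions -/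

theorem isSemialgebraic_iUnion_iInter {N : ℕ} {α β : Type*} [Finite α] [Finite β]
    (p : α → β → MvPolynomial (Fin N) ℝ) (σ : α → β → Bool) :
    IsSemialgebraic (⋃ i, ⋂ j,
      {x | if σ i j then eval x (p i j) = 0 else 0 < eval x (p i j)}) := by
  obtain ⟨k, ⟨e⟩⟩ := Finite.exists_equiv_fin α
  obtain ⟨l, ⟨e'⟩⟩ := Finite.exists_equiv_fin β
  refine ⟨k, l, fun i j => p (e.symm i) (e'.symm j), fun i j => σ (e.symm i) (e'.symm j), ?_⟩
  rw [← e.symm.surjective.iUnion_comp]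
  exact iUnion_congr fun i => (e'.symm.surjective.iInter_comp _).symm

theorem SemialgebraicPred.isSemialgebraic {N : ℕ} {S : Set (Fin N → ℝ)}
    (hS : SemialgebraicPred (· ∈ S)) : IsSemialgebraic S := by
  obtain ⟨F, hF, h⟩ := hS
  have := hF.to_subtype
  let pattern (x : Fin N → ℝ) (f : F) : SignType := SignType.sign (eval x f.1)
  have mem_cell (x : Fin N → ℝ) (f : MvPolynomial (Fin N) ℝ) (τ : SignType) :
      (if decide (τ = 0) then eval x (if τ = -1 then -f else f) = 0
        else 0 < eval x (if τ = -1 then -f else f)) ↔ SignType.sign (eval x f) = τ := by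
    cases τ <;> simp [sign_eq_zero_iff, sign_eq_neg_one_iff, sign_eq_one_iff]
  convert isSemialgebraic_iUnion_iInter (α := pattern '' S)
    (fun τ f => if τ.1 f = -1 then -f.1 else f.1) (fun τ f => decide (τ.1 f = 0))
  ext x
  simp only [mem_iUnion, mem_iInter, mem_ofPred_eq, mem_cell]
  constructor
  · exact fun hx => ⟨⟨pattern x, mem_image_of_mem _ hx⟩, fun _ => rfl⟩
  · rintro ⟨⟨_, y, hy, rfl⟩, hxy⟩
    exact h y x (fun f hf => (hxy ⟨f, hf⟩).symm) hy

theorem IsSemialgebraic.semialgebraicPred {N : ℕ} {S : Set (Fin N → ℝ)}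
    (hS : IsSemialgebraic S) : SemialgebraicPred (· ∈ S) := by
  obtain ⟨k, l, p, σ, rfl⟩ := hS
  refine ⟨range fun i : Fin k × Fin l => p i.1 i.2, finite_range _, fun x y hxy hx => ?_⟩
  simp only [mem_iUnion, mem_iInter, mem_ofPred_eq] at hx ⊢
  obtain ⟨i, hi⟩ := hx
  refine ⟨i, fun j => ?_⟩
  have hsign := hxy (p i j) ⟨(i, j), rfl⟩
  have hij := hi j
  rw [← sign_eq_zero_iff, ← sign_eq_one_iff] at hij ⊢
  rwa [← hsign]

namespace IsSemialgebraicOn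

variable {N : ℕ} {V : Set (Fin N → ℝ)} {f g : (Fin N → ℝ) → ℝ}

theorem semialgebraicPred_comp (hf : IsSemialgebraicOn V f) {ι : Type*}
    {t : (ι → ℝ) → Fin N → ℝ} (ht : ∀ k, IsPolynomialFun fun x => t x k)
    {q : (ι → ℝ) → ℝ → Prop}
    (hq : SemialgebraicPred fun v : Option ι → ℝ => q (fun i => v (some i)) (v none)) :
    SemialgebraicPred fun x => t x ∈ V ∧ q x (f (t x)) := by
  have hgraph := hf.semialgebraicPred.comp
    (t := fun k v => (Fin.snoc (t fun i => v (some i)) (v none) : Fin (N + 1) → ℝ) k)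
    (Fin.lastCases (by simpa using .apply none) fun k => by
      obtain ⟨p, hp⟩ := ht k
      exact ⟨rename some p, fun v => by simp [eval_rename, ← hp, Function.comp_def]⟩)
  refine (SemialgebraicPred.exists_real (p := fun x a => (t x ∈ V ∧ a = f (t x)) ∧ q x a)
    (.and (hgraph.congr fun v => by simp) hq)).congr fun x => ?_
  exact ⟨fun ⟨hx, hqx⟩ => ⟨_, ⟨hx, rfl⟩, hqx⟩, fun ⟨_, ⟨hx, rfl⟩, hqx⟩ => ⟨hx, hqx⟩⟩

theorem pow (hf : IsSemialgebraicOn V f) (n : ℕ) : IsSemialgebraicOn V fun x => f x ^ n :=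
  (hf.semialgebraicPred_comp (t := fun y i => y i.castSucc)
    (q := fun y a => y (Fin.last N) = a ^ n) (by fun_prop)
    (.eq (by fun_prop) (by fun_prop))).isSemialgebraic

theorem div (hf : IsSemialgebraicOn V f) (hg : IsSemialgebraicOn V g) :
    IsSemialgebraicOn V fun x => f x / g x := by
  refine (SemialgebraicPred.congr (hf.semialgebraicPred_comp (t := fun y i => y i.castSucc)
    (q := fun y a => (fun i : Fin N => y i.castSucc) ∈ V ∧
      y (Fin.last N) = a / g fun i => y i.castSucc) (by fun_prop) ?_) ?_).isSemialgebraic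
  · exact hg.semialgebraicPred_comp (t := fun v i => v (some i.castSucc))
      (q := fun v b => v (some (Fin.last N)) = v none / b) (by fun_prop)
      (.eq_div (by fun_prop) (by fun_prop) (by fun_prop))
  · exact fun y => ⟨fun h => ⟨h.1, h⟩, And.right⟩

end IsSemialgebraicOn

/-! ### Semialgebraic families of half-lines near zero -/

theorem continuous_evalEval (P : ℝ[X][X]) :
    Continuous fun v : ℝ × ℝ => P.evalEval v.1 v.2 := by
  induction P using Polynomial.induction_on' with
  | add P Q hP hQ =>
    simp only [Polynomial.evalEval_add]
    exact hP.add hQ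
  | monomial n a =>
    simp only [Polynomial.evalEval, Polynomial.eval_monomial, Polynomial.eval_mul,
      Polynomial.eval_pow, Polynomial.eval_C]
    fun_prop

theorem exists_evalEval_eq_eval (f : MvPolynomial (Fin 2) ℝ) :
    ∃ P : ℝ[X][X], ∀ a b, P.evalEval a b = eval ![a, b] f := by
  refine ⟨aeval ![Polynomial.C Polynomial.X, Polynomial.X] f, fun a b => ?_⟩
  induction f using MvPolynomial.induction_on with
  | C c => simp [Polynomial.algebraMap_apply]
  | add p q hp hq => simp only [map_add, Polynomial.evalEval_add, hp, hq]
  | mul_X p i hp =>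
    rw [map_mul, Polynomial.evalEval_mul, hp]
    fin_cases i <;> simp [Polynomial.evalEval_C]

theorem eventually_sign_eq {X : Type*} [TopologicalSpace X] {g : X → ℝ} {x : X}
    (hg : ContinuousAt g x) (hx : g x ≠ 0) :
    ∀ᶠ y in 𝓝 x, SignType.sign (g y) = SignType.sign (g x) := by
  have := (continuousAt_sign_of_ne_zero hx).comp hg
  rwa [ContinuousAt, nhds_discrete SignType, tendsto_pure] at this

theorem eventually_forall_Ioc_of_eventually_nhds_prod {p : ℝ → ℝ → Prop}
    (h : ∀ᶠ v : ℝ × ℝ in 𝓝 (0, 0), p v.1 v.2) :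
    ∀ᶠ δ in 𝓝[>] 0, ∀ u ∈ Ioc 0 δ, p δ u := by
  obtain ⟨ε, hε, h⟩ := Metric.eventually_nhds_iff.mp h
  filter_upwards [Ioo_mem_nhdsGT hε] with δ hδ u hu
  refine h (y := (δ, u)) (max_lt ?_ ?_) <;> rw [Real.dist_0_eq_abs, abs_lt] <;>
    constructor <;> linarith [hδ.1, hδ.2, hu.1, hu.2]

theorem exists_sign_evalEval_eq_of_pos_le_pow (P : ℝ[X][X]) :
    ∃ (m : ℕ) (τ : SignType), ∀ᶠ δ in 𝓝[>] (0 : ℝ), ∀ s ∈ Ioc 0 (δ ^ m),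
      SignType.sign (P.evalEval δ s) = τ := by
  induction P using Polynomial.recOnHorner with
  | M0 => exact ⟨0, 0, .of_forall fun δ s _ => by simp⟩
  | MX P _ ih =>
    obtain ⟨m, τ, h⟩ := ih
    refine ⟨m, τ, h.mono fun δ hδ s hs => ?_⟩
    rw [Polynomial.evalEval_mul, sign_mul, hδ s hs, Polynomial.evalEval_X, sign_pos hs.1, mul_one]
  | MC P a hP ha _ =>
    obtain ⟨Q, rfl⟩ := Polynomial.X_dvd_iff.mpr hP
    obtain ⟨b, hab, hb⟩ := Polynomial.exists_eq_pow_rootMultiplicity_mul_and_not_dvd a ha 0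
    rw [Polynomial.dvd_iff_isRoot, Polynomial.IsRoot.def] at hb
    set k := a.rootMultiplicity 0
    -- Substituting `s = δ ^ k * u`, the value at `(δ, s)` is `δ ^ k` times a function `g` of
    -- `(δ, u)` that does not vanish at the origin.
    let g (δ u : ℝ) : ℝ := u * Q.evalEval δ (δ ^ k * u) + b.eval δ
    have hg : Continuous fun v : ℝ × ℝ => g v.1 v.2 :=
      (continuous_snd.mul ((continuous_evalEval Q).comp (by fun_prop :
        Continuous fun v : ℝ × ℝ => (v.1, v.1 ^ k * v.2)))).add (by fun_prop)
    have hg0 : g 0 0 = b.eval 0 := by simp [g]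
    have rescale (δ u : ℝ) : (Polynomial.X * Q + Polynomial.C a).evalEval δ (δ ^ k * u) =
        δ ^ k * g δ u := by
      rw [hab]
      simp only [Polynomial.evalEval_add, Polynomial.evalEval_mul, Polynomial.evalEval_X,
        Polynomial.evalEval_C, Polynomial.eval_mul, Polynomial.eval_pow, Polynomial.eval_sub,
        Polynomial.eval_X, Polynomial.eval_C, g, sub_zero]
      ring
    refine ⟨k + 1, SignType.sign (g 0 0), ?_⟩
    filter_upwards [self_mem_nhdsWithin, eventually_forall_Ioc_of_eventually_nhds_prod
      (p := fun δ u => SignType.sign (g δ u) = SignType.sign (g 0 0))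
      (eventually_sign_eq hg.continuousAt (hg0.trans_ne hb))] with δ hδ hsign s hs
    have hδk : 0 < δ ^ k := pow_pos hδ k
    obtain ⟨u, rfl⟩ : ∃ u, s = δ ^ k * u := ⟨s / δ ^ k, (mul_div_cancel₀ s hδk.ne').symm⟩
    rw [rescale, sign_mul, sign_pos hδk, one_mul]
    refine hsign u ⟨pos_of_mul_pos_right hs.1 hδk.le, ?_⟩
    exact le_of_mul_le_mul_left (hs.2.trans_eq (pow_succ δ k)) hδk

theorem SemialgebraicPred.exists_pow_le {E : ℝ → ℝ → Prop}
    (hE : SemialgebraicPred fun v : Fin 2 → ℝ => E (v 0) (v 1))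
    (hpos : ∀ᶠ δ in 𝓝[>] 0, ∃ c > 0, ∀ s, E δ s → c ≤ s) :
    ∃ m : ℕ, ∀ᶠ δ in 𝓝[>] 0, ∀ s, E δ s → δ ^ m ≤ s := by
  obtain ⟨F, hF, h⟩ := hE
  have sign_eventually_const (f : MvPolynomial (Fin 2) ℝ) :
      ∃ (m : ℕ) (τ : SignType), ∀ᶠ δ in 𝓝[>] (0 : ℝ), ∀ s ∈ Ioc 0 (δ ^ m),
        SignType.sign (eval ![δ, s] f) = τ := by
    obtain ⟨P, hP⟩ := exists_evalEval_eq_eval f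
    simpa only [hP] using exists_sign_evalEval_eq_of_pos_le_pow P
  choose m τ hsign using sign_eventually_const
  obtain ⟨M, hM⟩ := (hF.image m).bddAbove
  refine ⟨M, ?_⟩
  filter_upwards [(eventually_all_finite hF).mpr fun f _ => hsign f, hpos,
    Ioo_mem_nhdsGT one_pos] with δ hδ ⟨c, hc, hcE⟩ ⟨hδ0, hδ1⟩ s hs
  by_contra! hsM
  have hcs := hcE s hs
  have hM' (f) (hf : f ∈ F) : δ ^ M ≤ δ ^ m f :=
    pow_le_pow_of_le_one hδ0.le hδ1.le (hM (mem_image_of_mem m hf))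
  have hE' : E δ (c / 2) := h ![δ, s] ![δ, c / 2] (fun f hf => by
    rw [hδ f hf s ⟨by linarith, by linarith [hM' f hf]⟩,
      hδ f hf (c / 2) ⟨by linarith, by linarith [hM' f hf]⟩]) hs
  linarith [hcE _ hE']

/-! ### The Łojasiewicz inequality -/

section CompactCore

variable {E : Type*} [NormedAddCommGroup E] [NormedSpace ℝ E] {V : Set E} {δ : ℝ}

/-- The points of `V` of norm at most `δ⁻¹` and at distance at least `δ` from `closure V \ V`, for
`0 < δ`. As `δ` decreases to zero, these compact sets exhaust `V` if `V` is locally closed. The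
norm is bounded in the form `‖δ • y‖ ≤ 1`, which is polynomial in `δ`. -/
def compactCore (V : Set E) (δ : ℝ) : Set E :=
  {y | y ∈ closure V ∧ ‖δ • y‖ ≤ 1 ∧ ∀ z, z ∈ closure V → dist z y < δ → z ∈ V}

theorem compactCore_subset (hδ : 0 < δ) : compactCore V δ ⊆ V :=
  fun y hy => hy.2.2 y hy.1 (by rwa [dist_self])

theorem isCompact_compactCore [ProperSpace E] (hδ : 0 < δ) : IsCompact (compactCore V δ) := by
  have hclosed : IsClosed (compactCore V δ) := by
    simp only [compactCore, ofPred_and, ofPred_forall]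
    exact isClosed_closure.inter ((isClosed_le (by fun_prop) (by fun_prop)).inter
      (isClosed_iInter fun z => isClosed_iInter fun _ =>
        isClosed_imp (isOpen_lt (by fun_prop) (by fun_prop)) isClosed_const))
  refine (isCompact_closedBall (0 : E) δ⁻¹).of_isClosed_subset hclosed fun y hy => ?_
  rw [mem_closedBall_zero_iff, ← one_div, le_div_iff₀' hδ]
  simpa [norm_smul, abs_of_pos hδ] using hy.2.1

theorem eventually_mem_compactCore (hV : IsLocallyClosed V) {x : E} (hx : x ∈ V) :
    ∀ᶠ p : ℝ × E in 𝓝 0 ×ˢ 𝓝[V] x, p.2 ∈ compactCore V p.1 := by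
  have hle : 𝓝 0 ×ˢ 𝓝[V] x ≤ 𝓝 ((0 : ℝ), x) := by
    rw [nhds_prod_eq]
    exact prod_mono_right _ nhdsWithin_le_nhds
  obtain ⟨U, Z, hU, hZ, rfl⟩ := hV
  obtain ⟨r, hr, hrU⟩ := Metric.isOpen_iff.mp hU x hx.1
  have hopen : IsOpen {p : ℝ × E | ‖p.1 • p.2‖ < 1 ∧ p.1 + dist p.2 x < r} := by
    rw [ofPred_and]
    exact (isOpen_lt (by fun_prop) (by fun_prop)).inter (isOpen_lt (by fun_prop) (by fun_prop))
  filter_upwards [hle (hopen.mem_nhds (by simpa)),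
    eventually_mem_nhdsWithin.prod_inr _] with p ⟨hp, hpr⟩ hpV
  refine ⟨subset_closure hpV, hp.le, fun z hz hzp => ⟨hrU ?_, ?_⟩⟩
  · exact Metric.mem_ball.mpr (by linarith [dist_triangle z p.2 x])
  · exact hZ.closure_subset_iff.mpr inter_subset_right hz

end CompactCore

theorem SemialgebraicPred.mem_compactCore {ι κ : Type*} [Fintype κ] {V : Set (κ → ℝ)}
    (hV : SemialgebraicPred (· ∈ V)) {t : (ι → ℝ) → ℝ} {f : (ι → ℝ) → κ → ℝ}
    (ht : IsPolynomialFun t) (hf : ∀ k, IsPolynomialFun fun x => f x k) :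
    SemialgebraicPred fun x => f x ∈ compactCore V (t x) := by
  have hmem : SemialgebraicPred fun v : Option κ → ℝ =>
      (fun k => v (some k)) ∈ compactCore V (v none) :=
    .and (hV.mem_closure.comp (by fun_prop)) <| .and
      (.norm_le_one fun k => by simp only [Pi.smul_apply, smul_eq_mul]; fun_prop) <|
      .forall_pi (p := fun v z => z ∈ closure V → dist z (fun k => v (some k)) < v none → z ∈ V) <|
        .imp (hV.mem_closure.comp (by fun_prop)) <|
        .imp (.dist_lt (by fun_prop) (by fun_prop) (by fun_prop)) (hV.comp (by fun_prop))
  exact hmem.comp (t := fun o x => o.elim (t x) (f x)) (by rintro (_ | k); exacts [ht, hf k])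

theorem exists_pos_le_abs_of_isCompact {X : Type*} [TopologicalSpace X] {K : Set X} {f g : X → ℝ}
    (hK : IsCompact K) (hf : ContinuousOn f K) (hg : ContinuousOn g K)
    (hfg : ∀ x ∈ K, f x = 0 → g x = 0) {δ : ℝ} (hδ : 0 < δ) :
    ∃ c > 0, ∀ x ∈ K, δ ≤ |g x| → c ≤ |f x| := by
  have hpos : ∀ x ∈ K, 0 < max |f x| (δ - |g x|) := fun x hx => by
    by_cases hfx : f x = 0
    · simp [hfg x hx hfx, hδ]
    · exact lt_max_of_lt_left (abs_pos.mpr hfx)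
  obtain ⟨c, hc, hle⟩ := hK.exists_forall_le' (hf.abs.sup (continuousOn_const.sub hg.abs)) hpos
  exact ⟨c, hc, fun x hx hδx => (hle x hx).trans
    (max_le le_rfl ((sub_nonpos.mpr hδx).trans (abs_nonneg _)))⟩

theorem continuousWithinAt_pow_succ_div {X : Type*} [TopologicalSpace X] {f g : X → ℝ} {s : Set X}
    {x : X} {n : ℕ} (hg : ContinuousWithinAt g s x) (hgx : g x = 0)
    (hle : ∀ᶠ y in 𝓝[s] x, |g y| ^ n ≤ |f y|) :
    ContinuousWithinAt (fun y => g y ^ (n + 1) / f y) s x := by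
  have hbound : ∀ᶠ y in 𝓝[s] x, ‖g y ^ (n + 1) / f y‖ ≤ |g y| := hle.mono fun y hy => by
    rw [Real.norm_eq_abs, abs_div, abs_pow, pow_succ']
    exact div_le_of_le_mul₀ (abs_nonneg _) (abs_nonneg _)
      (mul_le_mul_of_nonneg_left hy (abs_nonneg _))
  have hg0 : Tendsto (fun y => |g y|) (𝓝[s] x) (𝓝 0) := by simpa [hgx] using hg.tendsto.abs
  simpa [ContinuousWithinAt, hgx] using squeeze_zero_norm' hbound hg0

section Lojasiewicz

variable {N : ℕ} {V : Set (Fin N → ℝ)} {φ ψ : (Fin N → ℝ) → ℝ}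

theorem IsSemialgebraicOn.exists_pow_le_abs_on_compactCore (hV : IsSemialgebraic V)
    (hφc : ContinuousOn φ V) (hψc : ContinuousOn ψ V) (hφ : IsSemialgebraicOn V φ)
    (hψ : IsSemialgebraicOn V ψ) (hz : ∀ x ∈ V, φ x = 0 → ψ x = 0) :
    ∃ m : ℕ, ∀ᶠ δ in 𝓝[>] 0, ∀ y ∈ compactCore V δ, δ ≤ |ψ y| → δ ^ m ≤ |φ y| := by
  let E (δ s : ℝ) : Prop := ∃ y,
    y ∈ compactCore V δ ∧ (y ∈ V ∧ ¬|ψ y| < δ) ∧ (y ∈ V ∧ |φ y| ≤ s)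
  have hE : SemialgebraicPred fun v : Fin 2 → ℝ => E (v 0) (v 1) :=
    .exists_pi <| .and (hV.semialgebraicPred.mem_compactCore (by fun_prop) (by fun_prop)) <| .and
      (hψ.semialgebraicPred_comp (q := fun v a => ¬|a| < v (Sum.inl 0)) (by fun_prop)
        (.not (.abs_lt (by fun_prop) (by fun_prop))))
      (hφ.semialgebraicPred_comp (q := fun v a => |a| ≤ v (Sum.inl 1)) (by fun_prop)
        (.abs_le (by fun_prop) (by fun_prop)))
  obtain ⟨m, hm⟩ := hE.exists_pow_le <| by
    filter_upwards [self_mem_nhdsWithin] with δ (hδ : 0 < δ)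
    have hsub : compactCore V δ ⊆ V := compactCore_subset hδ
    obtain ⟨c, hc, hle⟩ := exists_pos_le_abs_of_isCompact (isCompact_compactCore hδ)
      (hφc.mono hsub) (hψc.mono hsub) (fun x hx => hz x (hsub hx)) hδ
    exact ⟨c, hc, fun s ⟨y, hy, ⟨_, hψy⟩, _, hφy⟩ => (hle y hy (not_lt.mp hψy)).trans hφy⟩
  refine ⟨m, ?_⟩
  filter_upwards [hm, self_mem_nhdsWithin] with δ hδm hδ y hy hψy
  have hyV := compactCore_subset hδ hy
  exact hδm _ ⟨y, hy, ⟨hyV, not_lt.mpr hψy⟩, hyV, le_rfl⟩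

theorem IsSemialgebraicOn.exists_pow_abs_le_abs (hV : IsLocallyClosed V) (hVsa : IsSemialgebraic V)
    (hφc : ContinuousOn φ V) (hψc : ContinuousOn ψ V) (hφ : IsSemialgebraicOn V φ)
    (hψ : IsSemialgebraicOn V ψ) (hz : ∀ x ∈ V, φ x = 0 → ψ x = 0) :
    ∃ n : ℕ, ∀ x ∈ V, ψ x = 0 → ∀ᶠ y in 𝓝[V] x, |ψ y| ^ n ≤ |φ y| := by
  obtain ⟨m, hm⟩ := hφ.exists_pow_le_abs_on_compactCore hVsa hφc hψc hψ hz
  refine ⟨m + 1, fun x hx hψx => ?_⟩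
  have hψ0 : Tendsto (fun y => |ψ y|) (𝓝[V] x) (𝓝 0) := by simpa [hψx] using (hψc x hx).tendsto.abs
  filter_upwards [hψ0.eventually (eventually_nhdsWithin_iff.mp hm),
    (hψ0.prodMk tendsto_id).eventually (eventually_mem_compactCore hV hx),
    hψ0.eventually_le_const one_pos] with y hψy hy hy1
  rcases (abs_nonneg (ψ y)).eq_or_lt with h0 | h0
  · simp [← h0]
  · calc |ψ y| ^ (m + 1) ≤ |ψ y| ^ m := pow_le_pow_of_le_one h0.le hy1 m.le_succ
      _ ≤ |φ y| := hψy h0 y hy le_rfl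

end Lojasiewicz

theorem stmt13 {N : ℕ} (V : Set (Fin N → ℝ)) (hV : IsLocallyClosed V)
    (hVsa : IsSemialgebraic V) (φ ψ : (Fin N → ℝ) → ℝ)
    (hφc : ContinuousOn φ V) (hψc : ContinuousOn ψ V)
    (hφsa : IsSemialgebraicOn V φ) (hψsa : IsSemialgebraicOn V ψ)
    (hz : ∀ x ∈ V, φ x = 0 → ψ x = 0) :
    ∃ (n : ℕ) (ρ : (Fin N → ℝ) → ℝ), 0 < n ∧ ContinuousOn ρ V ∧
      IsSemialgebraicOn V ρ ∧ ∀ x ∈ V, ψ x ^ n = ρ x * φ x := by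
  obtain ⟨n, hn⟩ := hφsa.exists_pow_abs_le_abs hV hVsa hφc hψc hψsa hz
  refine ⟨n + 1, fun x => ψ x ^ (n + 1) / φ x, n.succ_pos, fun x hx => ?_,
    (hψsa.pow (n + 1)).div hφsa, fun x hx => ?_⟩
  · by_cases hφx : φ x = 0
    · exact continuousWithinAt_pow_succ_div (hψc x hx) (hz x hx hφx) (hn x hx (hz x hx hφx))
    · exact ((hψc x hx).pow (n + 1)).div (hφc x hx) hφx
  · by_cases hφx : φ x = 0
    · simp [hφx, hz x hx hφx]
    · exact (div_mul_cancel₀ _ hφx).symm
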